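/- arXiv:2305.19861 — 2 statements merged into one kernel-verified Lean document; each statement's English description precedes it below -/
import Mathlib

section
/- (Shutdown alignment benefit.) In a finite shutdown scenario, any policy that is cautious (E[U₀] ≥ 0) and shutdown aligned is beneficial: E[U] ≥ 0. -/
open Finset

attribute [local instance] Classical.propDecidable

/-- Expectation of `X` under the finite probability mass function `P`. -/
noncomputable def pexp {Ω : Type} [Fintype Ω] (P X : Ω → ℝ) : ℝ := ∑ ω, P ω * X ω

/-- Probability of the event `A` under `P`. -/
noncomputable def pr {Ω : Type} [Fintype Ω] (P : Ω → ℝ) (A : Ω → Prop) : ℝ :=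
  ∑ ω, if A ω then P ω else 0

/-- Conditional expectation `E[X | A]` under `P`. -/
noncomputable def cexp {Ω : Type} [Fintype Ω] (P X : Ω → ℝ) (A : Ω → Prop) : ℝ :=
  (∑ ω, if A ω then P ω * X ω else 0) / pr P A

/-- Conditional probability `P(A | B)`. -/
noncomputable def cpr {Ω : Type} [Fintype Ω] (P : Ω → ℝ) (A B : Ω → Prop) : ℝ :=
  pr P (fun ω => A ω ∧ B ω) / pr P B

/-- `ω` is vigilant w.r.t. `(PaH, H, U, U₀)`: if shutting down is conditionally
preferable given the human's information, the human requests shutdown (`H ω = false`). -/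
def Vigilant {Ω O : Type} [Fintype Ω] (P : Ω → ℝ) (PaH : Ω → O)
    (H : Ω → Bool) (U U₀ : Ω → ℝ) (ω : Ω) : Prop :=
  cexp P U (fun ω' => PaH ω' = PaH ω) < cexp P U₀ (fun ω' => PaH ω' = PaH ω) → H ω = false

/-!
By the law of total expectation it suffices to compare `U₀` with `U` on each observation of
positive probability. An observation on which `E[U] < E[U₀]` would, by alignment, force shutdown
almost surely; but then the two utilities agree there, a contradiction. Hence `0 ≤ E[U₀] ≤ E[U]`.
-/

section

variable {Ω : Type} [Fintype Ω] {P : Ω → ℝ}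

lemma pr_nonneg (hP : ∀ ω, 0 ≤ P ω) (A : Ω → Prop) : 0 ≤ pr P A :=
  sum_nonneg fun ω _ => ite_nonneg (hP ω) le_rfl

lemma eq_zero_of_pr_eq_zero (hP : ∀ ω, 0 ≤ P ω) {A : Ω → Prop} (hA : pr P A = 0)
    {ω : Ω} (hω : A ω) : P ω = 0 := by
  have hterm := (sum_eq_zero_iff_of_nonneg fun ω _ => ite_nonneg (hP ω) le_rfl).1 hA ω (mem_univ ω)
  rwa [if_pos hω] at hterm

lemma pr_mul_cexp (hP : ∀ ω, 0 ≤ P ω) (X : Ω → ℝ) (A : Ω → Prop) :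
    pr P A * cexp P X A = ∑ ω with A ω, P ω * X ω := by
  rw [cexp, ← sum_filter]
  -- On a null event `cexp` is the junk value `0`, but the sum on the right vanishes as well.
  refine mul_div_cancel_of_imp' fun hA => sum_eq_zero fun ω hω => ?_
  rw [eq_zero_of_pr_eq_zero hP hA (mem_filter_univ ω |>.1 hω), zero_mul]

lemma pexp_eq_sum_pr_mul_cexp {O : Type*} (hP : ∀ ω, 0 ≤ P ω) (X : Ω → ℝ) (f : Ω → O) :
    pexp P X = ∑ o ∈ univ.image f, pr P (fun ω => f ω = o) * cexp P X (fun ω => f ω = o) := by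
  simp only [pr_mul_cexp hP]
  exact (sum_fiberwise_of_maps_to (fun ω hω => mem_image_of_mem f hω) _).symm

lemma pr_and_add_pr_not_and (P : Ω → ℝ) (A B : Ω → Prop) :
    pr P (fun ω => A ω ∧ B ω) + pr P (fun ω => ¬A ω ∧ B ω) = pr P B := by
  simp only [pr, ← sum_add_distrib]
  refine sum_congr rfl fun ω _ => ?_
  by_cases hA : A ω <;> simp [hA]

lemma eq_zero_of_cpr_eq_one (hP : ∀ ω, 0 ≤ P ω) {A B : Ω → Prop} (hAB : cpr P A B = 1)
    {ω : Ω} (hB : B ω) (hA : ¬A ω) : P ω = 0 := by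
  have hpr : pr P (fun ω => A ω ∧ B ω) = pr P B := eq_of_div_eq_one hAB
  have hnot : pr P (fun ω => ¬A ω ∧ B ω) = 0 := by
    linarith [pr_and_add_pr_not_and P A B]
  exact eq_zero_of_pr_eq_zero hP hnot ⟨hA, hB⟩

lemma cexp_le_cexp_of_cpr_eq_one (hP : ∀ ω, 0 ≤ P ω) {X Y : Ω → ℝ} {A B : Ω → Prop}
    (hAB : cpr P A B = 1) (hXY : ∀ ω, A ω → X ω ≤ Y ω) : cexp P X B ≤ cexp P Y B := by
  refine div_le_div_of_nonneg_right (sum_le_sum fun ω _ => ?_) (pr_nonneg hP B)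
  by_cases hB : B ω
  · rw [if_pos hB, if_pos hB]
    by_cases hA : A ω
    · exact mul_le_mul_of_nonneg_left (hXY ω hA) (hP ω)
    · simp [eq_zero_of_cpr_eq_one hP hAB hB hA]
  · rw [if_neg hB, if_neg hB]

theorem stmt3_general {O : Type*} (hP : ∀ ω, 0 ≤ P ω) (PaH : Ω → O) {D : Ω → Prop}
    {U U₀ : Ω → ℝ} (hD : ∀ ω, D ω → U₀ ω ≤ U ω)
    (haligned : ∀ o : O, 0 < pr P (fun ω => PaH ω = o) →
      cexp P U (fun ω => PaH ω = o) < cexp P U₀ (fun ω => PaH ω = o) →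
      cpr P D (fun ω => PaH ω = o) = 1) :
    pexp P U₀ ≤ pexp P U := by
  rw [pexp_eq_sum_pr_mul_cexp hP U₀ PaH, pexp_eq_sum_pr_mul_cexp hP U PaH]
  refine sum_le_sum fun o _ => ?_
  rcases (pr_nonneg hP fun ω => PaH ω = o).eq_or_lt with hzero | hpos
  · rw [← hzero, zero_mul, zero_mul]
  · refine mul_le_mul_of_nonneg_left ?_ hpos.le
    by_contra! hlt
    exact hlt.not_ge (cexp_le_cexp_of_cpr_eq_one hP (haligned o hpos hlt) hD)

end

/-- Shutdown alignment benefit: any cautious, shutdown aligned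
policy is beneficial: E[U] ≥ 0. -/
theorem stmt3 {Ω O : Type} [Fintype Ω] [Fintype O]
    (P : Ω → ℝ) (hP0 : ∀ ω, 0 ≤ P ω) (hP1 : ∑ ω, P ω = 1)
    (PaH : Ω → O) (H S : Ω → Bool) (U U₀ : Ω → ℝ)
    (hSDcons : ∀ ω, S ω = false → U ω = U₀ ω)
    (haligned : ∀ o : O, 0 < pr P (fun ω => PaH ω = o) →
      cexp P U (fun ω => PaH ω = o) < cexp P U₀ (fun ω => PaH ω = o) →
      cpr P (fun ω => S ω = false) (fun ω => PaH ω = o) = 1)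
    (hcautious : pexp P U₀ ≥ 0) :
    pexp P U ≥ 0 := by
  exact hcautious.le.trans (stmt3_general hP0 PaH (fun ω hω => (hSDcons ω hω).ge) haligned)
end

section
/- (Non-obstruction implies vigilance and obedience, contrapositive form.) In a finite shutdown scenario with potential outcomes under forced requests in which H is determined by the human's observation (H = f_H ∘ PaH), suppose the policy either does not ensure vigilance (P({ω : ω is not vigilant with respect to (PaH, H, U, U₀)}) > 0) or is disobedient (P({ω : S⁽⁰⁾(ω) ≠ false}) > 0, where S⁽⁰⁾ := S^{(false)}). Then there exist an intervened request H' : Ω → Bool and utilities Ũ, Ũ₀ : Ω → ℝ, obtained by one of the two explicit constructions — either H' = H, Ũ(ω) := −α if (PaH(ω) ∈ A ∧ S(ω) ≠ false) else U(ω) with Ũ₀ := U₀, where A := {o : P(PaH = o) > 0 ∧ E[U | PaH = o] < E[U₀ | PaH = o]}; or H'(ω) := false if PaH(ω) = o* else H(ω), S'(ω) := S^{(H'(ω))}(ω), Ũ(ω) := −α if (H'(ω) = false ∧ S'(ω) ≠ false) else U^{(H'(ω))}(ω), Ũ₀(ω) := U₀^{(H'(ω))}(ω), for some o* with P(PaH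 = o*) > 0 and some α ∈ ℝ — such that: (1) every ω with P({ω}) > 0 that is vigilant with respect to (PaH, H, U, U₀) is vigilant with respect to (PaH, H', Ũ, Ũ₀); and (2) E[Ũ] < E[Ũ₀] and E[Ũ] < 0. -/
open Finset

attribute [local instance] Classical.propDecidable

/-!
A large enough penalty on an event of positive probability pushes the expected utility below any
bound, so it suffices to find such an event on which a penalty creates no new failure of vigilance.

If vigilance fails with positive probability, it fails at an observation `o ∈ A`. There the system
keeps running with positive probability, since otherwise shutdown-consistency would give
`E[U | PaH = o] = E[U₀ | PaH = o]`. Penalizing it at observations in `A` is harmless: there a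
vigilant human already requests shutdown.

If the policy is disobedient, force the request at an observation where a shutdown request is
ignored with positive probability. The penalty is paid only where shutdown is requested, and there
vigilance is automatic. As the request is determined by the observation, the utilities are unchanged
on all of any other fibre of `PaH`.
-/

section Probability

variable {Ω : Type} [Fintype Ω] {P : Ω → ℝ}

theorem pr_pos_iff (hP0 : ∀ ω, 0 ≤ P ω) {A : Ω → Prop} :
    0 < pr P A ↔ ∃ ω, 0 < P ω ∧ A ω := by
  have h_nonneg : ∀ ω ∈ univ, 0 ≤ if A ω then P ω else 0 := fun ω _ => by
    split_ifs
    exacts [hP0 ω, le_rfl]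
  rw [pr, sum_pos_iff_of_nonneg h_nonneg]
  refine exists_congr fun ω => ?_
  by_cases hA : A ω <;> simp [hA]

theorem cexp_congr {X Y : Ω → ℝ} {A : Ω → Prop} (h : ∀ ω, P ω ≠ 0 → A ω → X ω = Y ω) :
    cexp P X A = cexp P Y A := by
  unfold cexp
  congr 1
  refine sum_congr rfl fun ω _ => ?_
  by_cases hP : P ω = 0
  · simp [hP]
  · split_ifs with hA
    · rw [h ω hP hA]
    · rfl

end Probability

section Penalty

variable {Ω : Type} {B : Ω → Prop} {V : Ω → ℝ}

/-- The utility `V` with its value replaced by `-α` on the event `B`. -/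
noncomputable def penalize (B : Ω → Prop) (α : ℝ) (V : Ω → ℝ) : Ω → ℝ :=
  fun ω => if B ω then -α else V ω

-- The instance is found by unification: `B` may hide a conjunction decided by `instDecidableAnd`.
theorem penalize_apply (ω : Ω) {_ : Decidable (B ω)} (α : ℝ) :
    penalize B α V ω = if B ω then -α else V ω := by
  unfold penalize
  congr

theorem penalize_of_not {ω : Ω} (h : ¬ B ω) (α : ℝ) : penalize B α V ω = V ω :=
  if_neg h

variable [Fintype Ω] {P : Ω → ℝ}

theorem pexp_penalize (α : ℝ) :
    pexp P (penalize B α V) = pexp P (penalize B 0 V) - α * pr P B := by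
  unfold pexp pr
  rw [mul_sum, ← sum_sub_distrib]
  refine sum_congr rfl fun ω _ => ?_
  unfold penalize
  split_ifs <;> ring

theorem exists_pexp_penalize_lt (hB : 0 < pr P B) (V : Ω → ℝ) (c : ℝ) :
    ∃ α, pexp P (penalize B α V) < c := by
  obtain ⟨α, hα⟩ := exists_gt ((pexp P (penalize B 0 V) - c) / pr P B)
  refine ⟨α, ?_⟩
  rw [pexp_penalize]
  linarith [(div_lt_iff₀ hB).mp hα]

end Penalty

section Obstruction

variable {Ω O : Type} [Fintype Ω] {P : Ω → ℝ} {PaH : Ω → O} {H : Ω → Bool} {U U₀ : Ω → ℝ}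

theorem Vigilant.congr_on_fiber {H' : Ω → Bool} {U' U₀' : Ω → ℝ} {ω : Ω}
    (hv : Vigilant P PaH H U U₀ ω) (hH : H' ω = H ω)
    (hU : ∀ ω', PaH ω' = PaH ω → U' ω' = U ω')
    (hU₀ : ∀ ω', PaH ω' = PaH ω → U₀' ω' = U₀ ω') :
    Vigilant P PaH H' U' U₀' ω := by
  unfold Vigilant at hv ⊢
  rwa [hH, cexp_congr fun ω' _ => hU ω', cexp_congr fun ω' _ => hU₀ ω']

/-- The request `H'` and utilities `U'`, `U₀'` witness that the policy is obstructive in the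
scenario `(PaH, H, U, U₀)`: they keep the human vigilant wherever she was (up to null points), yet
make the policy both worse than shutdown and harmful. -/
def IsObstructionWitness (P : Ω → ℝ) (PaH : Ω → O) (H : Ω → Bool) (U U₀ : Ω → ℝ)
    (H' : Ω → Bool) (U' U₀' : Ω → ℝ) : Prop :=
  (∀ ω, 0 < P ω → Vigilant P PaH H U U₀ ω → Vigilant P PaH H' U' U₀' ω) ∧
    pexp P U' < pexp P U₀' ∧ pexp P U' < 0

theorem exists_isObstructionWitness_penalize {B : Ω → Prop} {H' : Ω → Bool} {V U₀' : Ω → ℝ}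
    (hB : 0 < pr P B)
    (hv : ∀ α ω, Vigilant P PaH H U U₀ ω → Vigilant P PaH H' (penalize B α V) U₀' ω) :
    ∃ α, IsObstructionWitness P PaH H U U₀ H' (penalize B α V) U₀' := by
  obtain ⟨α, hα⟩ := exists_pexp_penalize_lt hB V (min (pexp P U₀') 0)
  exact ⟨α, fun ω _ => hv α ω, lt_min_iff.mp hα⟩

end Obstruction

section FailureOfVigilance

variable {Ω O : Type} [Fintype Ω] {P : Ω → ℝ} {PaH : Ω → O} {H S : Ω → Bool} {U U₀ : Ω → ℝ}

/-- The set `A` of observations of positive probability given which shutting down has the higher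
conditional expected utility. -/
def shutdownPreferred (P : Ω → ℝ) (PaH : Ω → O) (U U₀ : Ω → ℝ) : Set O :=
  {o | 0 < pr P (fun ω => PaH ω = o) ∧
    cexp P U (fun ω => PaH ω = o) < cexp P U₀ (fun ω => PaH ω = o)}

theorem exists_running_of_mem_shutdownPreferred (hP0 : ∀ ω, 0 ≤ P ω)
    (hS : ∀ ω, S ω = false → U ω = U₀ ω) {o : O} (ho : o ∈ shutdownPreferred P PaH U U₀) :
    ∃ ω, 0 < P ω ∧ PaH ω = o ∧ S ω ≠ false := by
  by_contra! h_off
  exact ho.2.ne <| cexp_congr fun ω hP hω => hS ω (h_off ω ((hP0 ω).lt_of_ne' hP) hω)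

theorem mem_shutdownPreferred_of_not_vigilant (hP0 : ∀ ω, 0 ≤ P ω) {ω : Ω} (hω : 0 < P ω)
    (hv : ¬ Vigilant P PaH H U U₀ ω) : PaH ω ∈ shutdownPreferred P PaH U U₀ :=
  ⟨(pr_pos_iff hP0).mpr ⟨ω, hω, rfl⟩, (Classical.not_imp.mp hv).1⟩

theorem pr_running_shutdownPreferred_pos (hP0 : ∀ ω, 0 ≤ P ω)
    (hS : ∀ ω, S ω = false → U ω = U₀ ω) (hv : 0 < pr P (fun ω => ¬ Vigilant P PaH H U U₀ ω)) :
    0 < pr P (fun ω => PaH ω ∈ shutdownPreferred P PaH U U₀ ∧ S ω ≠ false) := by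
  obtain ⟨ω₀, hPω₀, hvω₀⟩ := (pr_pos_iff hP0).mp hv
  have hA := mem_shutdownPreferred_of_not_vigilant hP0 hPω₀ hvω₀
  obtain ⟨ω, hPω, hω, hSω⟩ := exists_running_of_mem_shutdownPreferred hP0 hS hA
  exact (pr_pos_iff hP0).mpr ⟨ω, hPω, hω ▸ hA, hSω⟩

theorem Vigilant.penalize_shutdownPreferred {ω : Ω} (hv : Vigilant P PaH H U U₀ ω)
    (B : Ω → Prop) (α : ℝ) :
    Vigilant P PaH H
      (penalize (fun ω => PaH ω ∈ shutdownPreferred P PaH U U₀ ∧ B ω) α U) U₀ ω := by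
  by_cases hA : PaH ω ∈ shutdownPreferred P PaH U U₀
  · exact fun _ => hv hA.2
  · exact hv.congr_on_fiber rfl
      (fun ω' hω' => penalize_of_not (fun h => hA (hω' ▸ h.1)) α) (fun _ _ => rfl)

theorem exists_isObstructionWitness_of_not_vigilant (hP0 : ∀ ω, 0 ≤ P ω)
    (hS : ∀ ω, S ω = false → U ω = U₀ ω) (hv : 0 < pr P (fun ω => ¬ Vigilant P PaH H U U₀ ω)) :
    ∃ α, IsObstructionWitness P PaH H U U₀ H
      (penalize (fun ω => PaH ω ∈ shutdownPreferred P PaH U U₀ ∧ S ω ≠ false) α U) U₀ :=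
  exists_isObstructionWitness_penalize (pr_running_shutdownPreferred_pos hP0 hS hv)
    fun α _ hω => hω.penalize_shutdownPreferred _ α

end FailureOfVigilance

section Disobedience

variable {Ω O : Type}

/-- The value of the potential outcomes `X` when the request at each point is the one given by `H`;
the factual `S`, `U` and `U₀` are of this form for the actual request. -/
def realized {β : Type*} (X : Bool → Ω → β) (H : Ω → Bool) : Ω → β :=
  fun ω => X (H ω) ω

/-- The request `H`, overridden by a shutdown request wherever the human observes `o`. -/
noncomputable def forceShutdownAt (PaH : Ω → O) (o : O) (H : Ω → Bool) : Ω → Bool :=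
  fun ω => if PaH ω = o then false else H ω

/-- The event that shutdown is requested by `H` and the system keeps running. -/
def Disobeyed (Spo : Bool → Ω → Bool) (H : Ω → Bool) (ω : Ω) : Prop :=
  H ω = false ∧ realized Spo H ω ≠ false

variable {PaH : Ω → O} {H : Ω → Bool} {o : O} {Spo : Bool → Ω → Bool}

theorem forceShutdownAt_of_eq {ω : Ω} (h : PaH ω = o) : forceShutdownAt PaH o H ω = false :=
  if_pos h

theorem forceShutdownAt_of_ne {ω : Ω} (h : PaH ω ≠ o) : forceShutdownAt PaH o H ω = H ω :=
  if_neg h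

theorem disobeyed_forceShutdownAt {ω : Ω} (hω : PaH ω = o) (hS : Spo false ω ≠ false) :
    Disobeyed Spo (forceShutdownAt PaH o H) ω := by
  have h_off : forceShutdownAt PaH o H ω = false := forceShutdownAt_of_eq hω
  exact ⟨h_off, by rwa [realized, h_off]⟩

variable [Fintype Ω] {P : Ω → ℝ} {Upo U₀po : Bool → Ω → ℝ}

theorem Vigilant.penalize_forceShutdownAt (hH : H.FactorsThrough PaH) {ω : Ω}
    (hv : Vigilant P PaH H (realized Upo H) (realized U₀po H) ω) (o : O) (α : ℝ) :
    Vigilant P PaH (forceShutdownAt PaH o H)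
      (penalize (Disobeyed Spo (forceShutdownAt PaH o H)) α
        (realized Upo (forceShutdownAt PaH o H)))
      (realized U₀po (forceShutdownAt PaH o H)) ω := by
  by_cases h_off : forceShutdownAt PaH o H ω = false
  · exact fun _ => h_off
  have ho : PaH ω ≠ o := fun h => h_off (forceShutdownAt_of_eq h)
  have h_fiber : ∀ ω', PaH ω' = PaH ω → forceShutdownAt PaH o H ω' = H ω' :=
    fun ω' hω' => forceShutdownAt_of_ne (hω' ▸ ho)
  have h_on : ∀ ω', PaH ω' = PaH ω → forceShutdownAt PaH o H ω' ≠ false := fun ω' hω' => by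
    rwa [h_fiber ω' hω', hH hω', ← h_fiber ω rfl]
  refine hv.congr_on_fiber (h_fiber ω rfl) (fun ω' hω' => ?_) (fun ω' hω' => ?_)
  · rw [penalize_of_not fun h => h_on ω' hω' h.1, realized, realized, h_fiber ω' hω']
  · rw [realized, realized, h_fiber ω' hω']

theorem exists_isObstructionWitness_of_disobedient (hP0 : ∀ ω, 0 ≤ P ω)
    (hH : H.FactorsThrough PaH) (hS : 0 < pr P (fun ω => Spo false ω ≠ false)) :
    ∃ o, 0 < pr P (fun ω => PaH ω = o) ∧ ∃ α,
      IsObstructionWitness P PaH H (realized Upo H) (realized U₀po H) (forceShutdownAt PaH o H)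
        (penalize (Disobeyed Spo (forceShutdownAt PaH o H)) α
          (realized Upo (forceShutdownAt PaH o H)))
        (realized U₀po (forceShutdownAt PaH o H)) := by
  obtain ⟨ω₀, hPω₀, hSω₀⟩ := (pr_pos_iff hP0).mp hS
  have h_disobeyed : 0 < pr P (Disobeyed Spo (forceShutdownAt PaH (PaH ω₀) H)) :=
    (pr_pos_iff hP0).mpr ⟨ω₀, hPω₀, disobeyed_forceShutdownAt rfl hSω₀⟩
  exact ⟨PaH ω₀, (pr_pos_iff hP0).mpr ⟨ω₀, hPω₀, rfl⟩,
    exists_isObstructionWitness_penalize h_disobeyed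
      fun α _ hω => hω.penalize_forceShutdownAt hH _ α⟩

end Disobedience

theorem stmt9_general {Ω O : Type} [Fintype Ω] {P : Ω → ℝ} (hP0 : ∀ ω, 0 ≤ P ω)
    {PaH : Ω → O} {H : Ω → Bool} (hH : H.FactorsThrough PaH)
    {Spo : Bool → Ω → Bool} {Upo U₀po : Bool → Ω → ℝ}
    (hSDcons : ∀ ω, realized Spo H ω = false → realized Upo H ω = realized U₀po H ω)
    (hBad : 0 < pr P (fun ω => ¬ Vigilant P PaH H (realized Upo H) (realized U₀po H) ω) ∨
      0 < pr P (fun ω => Spo false ω ≠ false)) :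
    (∃ α, IsObstructionWitness P PaH H (realized Upo H) (realized U₀po H) H
      (penalize (fun ω => PaH ω ∈ shutdownPreferred P PaH (realized Upo H) (realized U₀po H) ∧
        realized Spo H ω ≠ false) α (realized Upo H))
      (realized U₀po H)) ∨
    ∃ o, 0 < pr P (fun ω => PaH ω = o) ∧ ∃ α,
      IsObstructionWitness P PaH H (realized Upo H) (realized U₀po H) (forceShutdownAt PaH o H)
        (penalize (Disobeyed Spo (forceShutdownAt PaH o H)) α
          (realized Upo (forceShutdownAt PaH o H)))
        (realized U₀po (forceShutdownAt PaH o H)) :=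
  hBad.imp (exists_isObstructionWitness_of_not_vigilant hP0 hSDcons)
    (exists_isObstructionWitness_of_disobedient hP0 hH)

/-- Non-obstruction implies vigilance and obedience, contrapositive
form: if the policy does not ensure vigilance or is disobedient, then one of the two
explicit interventions (punished utility on A ∩ {S ≠ false} with H' = H, or a forced
request at some o* with punishment for disobedience) preserves vigilance while making
the policy fail to weakly outperform shutdown and fail to be beneficial. -/
theorem stmt9 {Ω O : Type} [Fintype Ω] [Fintype O]
    (P : Ω → ℝ) (hP0 : ∀ ω, 0 ≤ P ω) (hP1 : ∑ ω, P ω = 1)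
    (PaH : Ω → O) (H S : Ω → Bool) (U U₀ : Ω → ℝ)
    (hSDcons : ∀ ω, S ω = false → U ω = U₀ ω)
    (Spo : Bool → Ω → Bool) (Upo U₀po : Bool → Ω → ℝ)
    (hfactS : ∀ ω, S ω = Spo (H ω) ω)
    (hfactU : ∀ ω, U ω = Upo (H ω) ω)
    (hfactU₀ : ∀ ω, U₀ ω = U₀po (H ω) ω)
    (hSDconsPo : ∀ h ω, Spo h ω = false → Upo h ω = U₀po h ω)
    (fH : O → Bool) (hHdet : ∀ ω, H ω = fH (PaH ω))
    (hBad : 0 < pr P (fun ω => ¬ Vigilant P PaH H U U₀ ω) ∨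
            0 < pr P (fun ω => Spo false ω ≠ false)) :
    ∃ H' : Ω → Bool, ∃ Ut U₀t : Ω → ℝ,
      ((∃ α : ℝ,
          (∀ ω, H' ω = H ω) ∧
          (∀ ω, Ut ω =
            if (0 < pr P (fun ω' => PaH ω' = PaH ω) ∧
                  cexp P U (fun ω' => PaH ω' = PaH ω) <
                    cexp P U₀ (fun ω' => PaH ω' = PaH ω)) ∧ S ω ≠ false
            then -α else U ω) ∧
          (∀ ω, U₀t ω = U₀ ω)) ∨
       (∃ oStar : O, ∃ α : ℝ,
          0 < pr P (fun ω => PaH ω = oStar) ∧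
          (∀ ω, H' ω = if PaH ω = oStar then false else H ω) ∧
          (∀ ω, Ut ω =
            if H' ω = false ∧ Spo (H' ω) ω ≠ false
            then -α else Upo (H' ω) ω) ∧
          (∀ ω, U₀t ω = U₀po (H' ω) ω))) ∧
      (∀ ω, 0 < P ω → Vigilant P PaH H U U₀ ω → Vigilant P PaH H' Ut U₀t ω) ∧
      pexp P Ut < pexp P U₀t ∧ pexp P Ut < 0 := by
  obtain rfl : S = realized Spo H := funext hfactS
  obtain rfl : U = realized Upo H := funext hfactU
  obtain rfl : U₀ = realized U₀po H := funext hfactU₀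
  have hH : H.FactorsThrough PaH := fun _ _ h => by rw [hHdet, hHdet, h]
  obtain ⟨α, hα⟩ | ⟨o, ho, α, hα⟩ := stmt9_general hP0 hH hSDcons hBad
  · exact ⟨H, _, _, .inl ⟨α, fun _ => rfl, fun ω => penalize_apply ω α, fun _ => rfl⟩, hα⟩
  · exact ⟨_, _, _, .inr ⟨o, α, ho, fun _ => rfl, fun ω => penalize_apply ω α, fun _ => rfl⟩, hα⟩
end
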